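/- arXiv:math/0102209 — 5 statements merged into one kernel-verified Lean document; each statement's English description precedes it below -/
import Mathlib

section
/- Let w_1,…,w_p : ℝ^N → ℝ^N (p ≥ 2) be contracting similarities, i.e. ‖w_j(x) − w_j(y)‖ = λ_j‖x − y‖ with λ_j ∈ (0,1), and let s > 0 be the unique real number with Σ_{j=1}^p λ_j^s = 1. Then there exists a unique Borel probability measure μ on ℝ^N with compact support such that μ = Σ_{j=1}^p λ_j^s (w_j)_*μ, i.e. μ(A) = Σ_{j=1}^p λ_j^s μ(w_j^{-1}(A)) for every Borel set A ⊆ ℝ^N. -/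
open MeasureTheory

/-- Prepend a letter to an infinite word. -/
def consWord {p : ℕ} (j : Fin p) (ω : ℕ → Fin p) : ℕ → Fin p
  | 0 => j
  | n + 1 => ω n

lemma measurable_consWord {p : ℕ} (j : Fin p) : Measurable (consWord j) := by
  refine measurable_pi_iff.2 fun n => ?_
  cases n with
  | zero => exact measurable_const
  | succ n => exact measurable_pi_apply n

/-- Self-similarity of the Bernoulli measure. -/
lemma bernoulli_eq {p : ℕ} (c : Fin p → ENNReal) (ν : Measure (Fin p)) [IsProbabilityMeasure ν]
    (hν : ν = ∑ j, c j • Measure.dirac j) :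
    ∑ j, c j • (Measure.infinitePi (fun _ : ℕ => ν)).map (consWord j)
      = Measure.infinitePi (fun _ : ℕ => ν) := by
  classical
  refine Measure.eq_infinitePi _ fun s t ht => ?_
  obtain ⟨n, hn⟩ := s.exists_nat_subset_range
  have hn' : s ⊆ Finset.range (n + 1) :=
    hn.trans (Finset.range_subset_range.2 (Nat.le_succ n))
  let t' : ℕ → Set (Fin p) := fun i => if i ∈ s then t i else Set.univ
  have ht' : ∀ i, MeasurableSet (t' i) := fun i => (Set.toFinite _).measurableSet
  have h1 : Set.pi (s : Set ℕ) t = Set.pi (Finset.range (n + 1) : Set ℕ) t' := by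
    ext ω
    simp only [Set.mem_pi, t']
    constructor
    · intro h i _
      by_cases hi : i ∈ s
      · simpa [hi] using h i hi
      · simp [hi]
    · intro h i hi
      have := h i (hn' hi)
      rwa [if_pos (by exact hi)] at this
  have h2 : ∏ i ∈ s, ν (t i) = ∏ i ∈ Finset.range (n + 1), ν (t' i) := by
    rw [← Finset.prod_subset hn' (f := fun i => ν (t' i))]
    · exact Finset.prod_congr rfl fun i hi => by simp [t', hi]
    · intro i _ hi
      simp [t', hi]
  have h3 : ∀ j, consWord j ⁻¹' (Set.pi (Finset.range (n + 1) : Set ℕ) t')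
      = if j ∈ t' 0 then Set.pi (Finset.range n : Set ℕ) (fun i => t' (i + 1)) else ∅ := by
    intro j
    ext ω
    split_ifs with hj
    · simp only [Set.mem_preimage, Set.mem_pi, Finset.coe_range, Set.mem_Iio]
      constructor
      · intro h i hi
        exact h (i + 1) (by omega)
      · intro h i hi
        cases i with
        | zero => exact hj
        | succ i => exact h i (by omega)
    · simp only [Set.mem_preimage, Set.mem_pi, Finset.coe_range, Set.mem_Iio,
        Set.mem_empty_iff_false, iff_false]
      intro h
      exact hj (h 0 (by omega))
  have h4 : ν (t' 0) = ∑ j, c j * (if j ∈ t' 0 then 1 else 0) := by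
    conv_lhs => rw [hν]
    simp [Measure.finsetSum_apply, Set.indicator_apply]
  rw [h1, h2, Finset.prod_range_succ', h4, Finset.mul_sum, Measure.finsetSum_apply]
  refine Finset.sum_congr rfl fun j _ => ?_
  rw [Measure.smul_apply, Measure.map_apply (measurable_consWord j)
    (MeasurableSet.pi (Set.to_countable _) fun i _ => ht' i), h3]
  split_ifs with hj
  · rw [Measure.infinitePi_pi _ fun i _ => ht' (i + 1)]
    simp [mul_comm]
  · simp

/-- Finite-level coding map. -/
def codeApprox {p : ℕ} {E : Type*} [Zero E] (w : Fin p → E → E) : ℕ → (ℕ → Fin p) → E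
  | 0, _ => 0
  | n + 1, ω => w (ω 0) (codeApprox w n (fun k => ω (k + 1)))

lemma exists_code {p N : ℕ} (w : Fin p → EuclideanSpace ℝ (Fin N) → EuclideanSpace ℝ (Fin N))
    (r : ℝ) (hr0 : 0 ≤ r) (hr : r < 1) (hw : ∀ j x y, dist (w j x) (w j y) ≤ r * dist x y) :
    ∃ (R : ℝ) (π : (ℕ → Fin p) → EuclideanSpace ℝ (Fin N)), Measurable π ∧
      (∀ ω, ‖π ω‖ ≤ R) ∧ ∀ j ω, π (consWord j ω) = w j (π ω) := by
  have hcont : ∀ j, Continuous (w j) := fun j =>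
    (LipschitzWith.of_dist_le_mul (K := ⟨r, hr0⟩) (hw j)).continuous
  obtain ⟨M, hM0, hM⟩ : ∃ M : ℝ, 0 ≤ M ∧ ∀ j, ‖w j 0‖ ≤ M :=
    ⟨∑ j, ‖w j 0‖, Finset.sum_nonneg fun _ _ => norm_nonneg _, fun j =>
      Finset.single_le_sum (f := fun j => ‖w j 0‖) (fun _ _ => norm_nonneg _)
        (Finset.mem_univ j)⟩
  have h1r : 0 < 1 - r := by linarith
  have hR0 : 0 ≤ M / (1 - r) := by positivity
  have hbound : ∀ n ω, ‖codeApprox w n ω‖ ≤ M / (1 - r) := by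
    intro n
    induction n with
    | zero => intro ω; simpa [codeApprox] using hR0
    | succ n ih =>
      intro ω
      simp only [codeApprox]
      set x := codeApprox w n (fun k => ω (k + 1)) with hx
      have h1 : ‖x‖ ≤ M / (1 - r) := ih _
      have h2 := hw (ω 0) x 0
      rw [dist_zero_right, dist_eq_norm] at h2
      have h3 : ‖w (ω 0) x‖ ≤ ‖w (ω 0) x - w (ω 0) 0‖ + ‖w (ω 0) 0‖ := by
        simpa using norm_add_le (w (ω 0) x - w (ω 0) 0) (w (ω 0) 0)
      have h4 : r * (M / (1 - r)) + M = M / (1 - r) := by field_simp; ring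
      have h5 := mul_le_mul_of_nonneg_left h1 hr0
      linarith [hM (ω 0)]
  have hstep : ∀ n ω, dist (codeApprox w n ω) (codeApprox w (n + 1) ω)
      ≤ (M / (1 - r)) * r ^ n := by
    intro n
    induction n with
    | zero =>
      intro ω
      have := hbound 1 ω
      simpa [codeApprox] using this
    | succ n ih =>
      intro ω
      have h1 := hw (ω 0) (codeApprox w n (fun k => ω (k + 1)))
        (codeApprox w (n + 1) (fun k => ω (k + 1)))
      have h2 := mul_le_mul_of_nonneg_left (ih (fun k => ω (k + 1))) hr0
      calc _ ≤ _ := h1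
        _ ≤ _ := h2
        _ = _ := by ring
  have hlim : ∀ ω, ∃ x, Filter.Tendsto (fun n => codeApprox w n ω) Filter.atTop (nhds x) :=
    fun ω => cauchySeq_tendsto_of_complete
      (cauchySeq_of_le_geometric r _ hr (fun n => hstep n ω))
  choose π hπ using hlim
  have hmeas : ∀ n, Measurable (codeApprox w n) := by
    intro n
    induction n with
    | zero => exact measurable_const
    | succ n ih =>
      have hW : Measurable (fun q : Fin p × EuclideanSpace ℝ (Fin N) => w q.1 q.2) :=
        measurable_from_prod_countable_right fun j => (hcont j).measurable
      have hsh : Measurable (fun (ω : ℕ → Fin p) (k : ℕ) => ω (k + 1)) :=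
        measurable_pi_iff.2 fun k => measurable_pi_apply (k + 1)
      exact hW.comp ((measurable_pi_apply 0).prodMk (ih.comp hsh))
  refine ⟨M / (1 - r), π, ?_, ?_, ?_⟩
  · exact measurable_of_tendsto_metrizable hmeas (tendsto_pi_nhds.2 hπ)
  · intro ω
    exact le_of_tendsto (hπ ω).norm (Filter.Eventually.of_forall fun n => hbound n ω)
  · intro j ω
    refine tendsto_nhds_unique ((Filter.tendsto_add_atTop_iff_nat 1).2 (hπ (consWord j ω))) ?_
    exact ((hcont j).tendsto _).comp (hπ ω)

lemma integrable_of_compact {N : ℕ} (μ : Measure (EuclideanSpace ℝ (Fin N)))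
    [IsFiniteMeasure μ] (K : Set (EuclideanSpace ℝ (Fin N))) (hK : IsCompact K)
    (hμ : μ Kᶜ = 0) (f : EuclideanSpace ℝ (Fin N) → ℂ) (hf : Continuous f) :
    Integrable f μ := by
  have h := hf.continuousOn.integrableOn_compact (μ := μ) hK
  rwa [IntegrableOn, Measure.restrict_eq_self_of_ae_mem] at h
  exact mem_ae_iff.2 hμ

lemma integral_near {N : ℕ} (μ : Measure (EuclideanSpace ℝ (Fin N)))
    [IsProbabilityMeasure μ] (K : Set (EuclideanSpace ℝ (Fin N))) (hK : IsCompact K)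
    (hμ : μ Kᶜ = 0) : ∃ R : ℝ, ∀ (L : ℝ) (f : EuclideanSpace ℝ (Fin N) → ℂ), 0 ≤ L →
      Continuous f →
      (∀ x y, dist (f x) (f y) ≤ L * dist x y) → ‖(∫ x, f x ∂μ) - f 0‖ ≤ L * R := by
  obtain ⟨R, hR⟩ := hK.isBounded.exists_norm_le
  refine ⟨R, fun L f hL hc hf => ?_⟩
  have hi := integrable_of_compact μ K hK hμ f hc
  have h1 : (∫ x, f x ∂μ) - f 0 = ∫ x, (f x - f 0) ∂μ := by
    rw [integral_sub hi (integrable_const _)]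
    simp
  rw [h1]
  have h2 : ∀ᵐ x ∂μ, ‖f x - f 0‖ ≤ L * R := by
    have : ∀ᵐ x ∂μ, x ∈ K := mem_ae_iff.2 hμ
    filter_upwards [this] with x hx
    have h3 := hf x 0
    rw [dist_zero_right, dist_eq_norm] at h3
    exact h3.trans (mul_le_mul_of_nonneg_left (hR x hx) hL)
  simpa using norm_integral_le_of_norm_le_const h2

lemma integral_selfsim {p N : ℕ}
    (w : Fin p → EuclideanSpace ℝ (Fin N) → EuclideanSpace ℝ (Fin N))
    (hcont : ∀ j, Continuous (w j)) (c : Fin p → ℝ) (hc : ∀ j, 0 ≤ c j)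
    (μ : Measure (EuclideanSpace ℝ (Fin N)))
    [IsProbabilityMeasure μ] (K : Set (EuclideanSpace ℝ (Fin N))) (hK : IsCompact K)
    (hμ : μ Kᶜ = 0) (h : μ = ∑ j, ENNReal.ofReal (c j) • μ.map (w j))
    (f : EuclideanSpace ℝ (Fin N) → ℂ) (hf : Continuous f) :
    ∫ x, f x ∂μ = ∑ j, c j • ∫ x, f (w j x) ∂μ := by
  conv_lhs => rw [h]
  rw [integral_finsetSum_measure]
  · refine Finset.sum_congr rfl fun j _ => ?_
    rw [integral_smul_measure, integral_map (hcont j).aemeasurable hf.aestronglyMeasurable,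
      ENNReal.toReal_ofReal (hc j)]
  · intro j _
    refine Integrable.smul_measure ?_ ENNReal.ofReal_ne_top
    rw [integrable_map_measure hf.aestronglyMeasurable (hcont j).aemeasurable]
    exact integrable_of_compact μ K hK hμ _ (hf.comp (hcont j))

lemma selfsim_unique {p N : ℕ}
    (w : Fin p → EuclideanSpace ℝ (Fin N) → EuclideanSpace ℝ (Fin N))
    (r : ℝ) (hr0 : 0 ≤ r) (hr : r < 1) (hw : ∀ j x y, dist (w j x) (w j y) ≤ r * dist x y)
    (c : Fin p → ℝ) (hc : ∀ j, 0 ≤ c j) (hsum : ∑ j, c j = 1)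
    (μ ν : Measure (EuclideanSpace ℝ (Fin N)))
    [IsProbabilityMeasure μ] [IsProbabilityMeasure ν]
    (K : Set (EuclideanSpace ℝ (Fin N))) (hK : IsCompact K) (hμK : μ Kᶜ = 0)
    (K' : Set (EuclideanSpace ℝ (Fin N))) (hK' : IsCompact K') (hνK : ν K'ᶜ = 0)
    (hμ : μ = ∑ j, ENNReal.ofReal (c j) • μ.map (w j))
    (hν : ν = ∑ j, ENNReal.ofReal (c j) • ν.map (w j)) : μ = ν := by
  have hcont : ∀ j, Continuous (w j) := fun j =>
    (LipschitzWith.of_dist_le_mul (K := ⟨r, hr0⟩) (hw j)).continuous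
  obtain ⟨R, hR⟩ := integral_near μ K hK hμK
  obtain ⟨R', hR'⟩ := integral_near ν K' hK' hνK
  have key : ∀ (n : ℕ) (L : ℝ) (f : EuclideanSpace ℝ (Fin N) → ℂ), 0 ≤ L → Continuous f →
      (∀ x y, dist (f x) (f y) ≤ L * dist x y) →
      ‖(∫ x, f x ∂μ) - ∫ x, f x ∂ν‖ ≤ L * (R + R') * r ^ n := by
    intro n
    induction n with
    | zero =>
      intro L f hL hf hd
      have h1 := hR L f hL hf hd
      have h2 := hR' L f hL hf hd
      have h3 := norm_sub_le ((∫ x, f x ∂μ) - f 0) ((∫ x, f x ∂ν) - f 0)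
      rw [sub_sub_sub_cancel_right] at h3
      simp only [pow_zero, mul_one]
      linarith
    | succ n ih =>
      intro L f hL hf hd
      rw [integral_selfsim w hcont c hc μ K hK hμK hμ f hf,
        integral_selfsim w hcont c hc ν K' hK' hνK hν f hf, ← Finset.sum_sub_distrib]
      refine (norm_sum_le _ _).trans ?_
      have hj : ∀ j, ‖c j • (∫ x, f (w j x) ∂μ) - c j • ∫ x, f (w j x) ∂ν‖
          ≤ c j * (L * (R + R') * r ^ (n + 1)) := by
        intro j
        rw [← smul_sub, norm_smul, Real.norm_of_nonneg (hc j)]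
        refine mul_le_mul_of_nonneg_left ?_ (hc j)
        refine (ih (L * r) (fun x => f (w j x)) (mul_nonneg hL hr0) (hf.comp (hcont j)) ?_).trans
          (le_of_eq (by ring))
        intro x y
        calc _ ≤ _ := hd (w j x) (w j y)
          _ ≤ _ := mul_le_mul_of_nonneg_left (hw j x y) hL
          _ = _ := by ring
      refine (Finset.sum_le_sum fun j _ => hj j).trans (le_of_eq ?_)
      rw [← Finset.sum_mul, hsum, one_mul]
  apply Measure.ext_of_charFun
  funext t
  rw [charFun_apply, charFun_apply, ← sub_eq_zero, ← norm_le_zero_iff]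
  have hlim : Filter.Tendsto (fun n : ℕ => ‖t‖ * (R + R') * r ^ n) Filter.atTop (nhds 0) := by
    simpa using (tendsto_pow_atTop_nhds_zero_of_lt_one hr0 hr).const_mul (‖t‖ * (R + R'))
  refine ge_of_tendsto' hlim fun n => key n ‖t‖ _ (norm_nonneg _) (by fun_prop) ?_
  intro x y
  have h1 : Complex.exp ((inner ℝ x t : ℝ) * Complex.I)
      - Complex.exp ((inner ℝ y t : ℝ) * Complex.I)
      = Complex.exp ((inner ℝ y t : ℝ) * Complex.I) *
        (Complex.exp (Complex.I * (inner ℝ (x - y) t : ℝ)) - 1) := by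
    rw [mul_sub, ← Complex.exp_add, inner_sub_left]
    push_cast
    ring_nf
  rw [dist_eq_norm, h1, norm_mul, Complex.norm_exp_ofReal_mul_I, one_mul]
  refine (Real.norm_exp_I_mul_ofReal_sub_one_le).trans ?_
  rw [dist_eq_norm, mul_comm]
  exact norm_inner_le_norm _ _



/-- for contracting similarities `w_1,…,w_p` of `ℝ^N` (`p ≥ 2`) with ratios
`λ_j ∈ (0,1)` and the similarity dimension `s > 0` satisfying `Σ_j λ_j^s = 1`, there is a
unique compactly supported Borel probability measure `μ` on `ℝ^N` with
`μ = Σ_{j=1}^p λ_j^s (w_j)_* μ`. -/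
theorem stmt_7 (N p : ℕ) (hp : 2 ≤ p)
    (w : Fin p → EuclideanSpace ℝ (Fin N) → EuclideanSpace ℝ (Fin N))
    (lam : Fin p → ℝ)
    (hlam : ∀ j, lam j ∈ Set.Ioo (0 : ℝ) 1)
    (hsim : ∀ j x y, dist (w j x) (w j y) = lam j * dist x y)
    (s : ℝ) (hs : 0 < s)
    (hsum : ∑ j, lam j ^ s = 1) :
    ∃! μ : Measure (EuclideanSpace ℝ (Fin N)),
      IsProbabilityMeasure μ ∧
      (∃ K : Set (EuclideanSpace ℝ (Fin N)), IsCompact K ∧ μ Kᶜ = 0) ∧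
      μ = ∑ j, ENNReal.ofReal (lam j ^ s) • μ.map (w j) := by

  classical
  have : Nonempty (Fin p) := ⟨⟨0, by omega⟩⟩
  obtain ⟨j0, hj0⟩ := Finite.exists_max lam
  have hr0 : 0 ≤ lam j0 := (hlam j0).1.le
  have hr : lam j0 < 1 := (hlam j0).2
  have hw : ∀ j x y, dist (w j x) (w j y) ≤ lam j0 * dist x y := fun j x y => by
    rw [hsim]
    exact mul_le_mul_of_nonneg_right (hj0 j) dist_nonneg
  have hcont : ∀ j, Continuous (w j) := fun j =>
    (LipschitzWith.of_dist_le_mul (K := ⟨lam j0, hr0⟩) (hw j)).continuous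
  have hc : ∀ j, 0 ≤ lam j ^ s := fun j => Real.rpow_nonneg (hlam j).1.le s
  obtain ⟨R, π, hπm, hπR, hπ⟩ := exists_code w (lam j0) hr0 hr hw
  let ν : Measure (Fin p) := ∑ j, ENNReal.ofReal (lam j ^ s) • Measure.dirac j
  have hνp : IsProbabilityMeasure ν := ⟨by
    simp only [ν, Measure.finsetSum_apply, Measure.smul_apply, measure_univ, smul_eq_mul,
      mul_one]
    rw [← ENNReal.ofReal_sum_of_nonneg fun j _ => hc j, hsum, ENNReal.ofReal_one]⟩
  have hP := bernoulli_eq (fun j => ENNReal.ofReal (lam j ^ s)) ν rfl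
  set P := Measure.infinitePi (fun _ : ℕ => ν) with hPdef
  have hPp : IsProbabilityMeasure P := by rw [hPdef]; infer_instance
  have hex : ∃ μ : Measure (EuclideanSpace ℝ (Fin N)),
      IsProbabilityMeasure μ ∧
      (∃ K : Set (EuclideanSpace ℝ (Fin N)), IsCompact K ∧ μ Kᶜ = 0) ∧
      μ = ∑ j, ENNReal.ofReal (lam j ^ s) • μ.map (w j) := by
    refine ⟨P.map π, Measure.isProbabilityMeasure_map hπm.aemeasurable,
      ⟨Metric.closedBall 0 R, isCompact_closedBall 0 R, ?_⟩, ?_⟩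
    · rw [Measure.map_apply hπm Metric.isClosed_closedBall.measurableSet.compl]
      have : π ⁻¹' (Metric.closedBall 0 R)ᶜ = ∅ := by
        ext ω
        simpa using hπR ω
      rw [this, measure_empty]
    · ext A hA
      conv_lhs => rw [← hP]
      rw [Measure.map_apply hπm hA, Measure.finsetSum_apply, Measure.finsetSum_apply]
      refine Finset.sum_congr rfl fun j _ => ?_
      rw [Measure.smul_apply, Measure.smul_apply,
        Measure.map_apply (measurable_consWord j) (hπm hA),
        Measure.map_apply (hcont j).measurable hA,
        Measure.map_apply hπm ((hcont j).measurable hA)]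
      congr 2
      ext ω
      simp [hπ]
  obtain ⟨μ, hμ1, ⟨K, hK, hμK⟩, hμ⟩ := hex
  refine ⟨μ, ⟨hμ1, ⟨K, hK, hμK⟩, hμ⟩, ?_⟩
  rintro μ' ⟨hμ1', ⟨K', hK', hμK'⟩, hμ'⟩
  exact selfsim_unique w (lam j0) hr0 hr hw (fun j => lam j ^ s) hc hsum μ' μ K' hK' hμK'
    K hK hμK hμ' hμ
end

section
/- Let (μ_n)_{n≥1} be a nonincreasing sequence of positive real numbers converging to 0 such that lim_{n→∞} μ_n/μ_{2n} = ℓ ∈ (1,∞). Let μ(x) := μ_n for x ∈ [n,n+1) and f(t) := −log μ(e^t). Then lim_{h→∞} limsup_{t→∞} (f(t+h) − f(t))/h = lim_{h→∞} liminf_{t→∞} (f(t+h) − f(t))/h = (log ℓ)/(log 2); equivalently, c̲ = c̄ = (log 2)/(log ℓ) ∈ (0,∞). -/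
open Filter

/-- The (extended-real valued) `limsup_{t→∞} (f(t+h) − f(t))/h`. -/
noncomputable def limsupRatio (f : ℝ → ℝ) (h : ℝ) : EReal :=
  limsup (fun t : ℝ => (((f (t + h) - f t) / h : ℝ) : EReal)) atTop

/-- The (extended-real valued) `liminf_{t→∞} (f(t+h) − f(t))/h`. -/
noncomputable def liminfRatio (f : ℝ → ℝ) (h : ℝ) : EReal :=
  liminf (fun t : ℝ => (((f (t + h) - f t) / h : ℝ) : EReal)) atTop

/-- The function `f(t) = −log μ(e^t)` where `μ(x) = μ_n` for `x ∈ [n, n+1)`. -/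
noncomputable def fStep (μ : ℕ → ℝ) (t : ℝ) : ℝ :=
  -Real.log (μ ⌊Real.exp t⌋₊)

lemma aux_pow (μ : ℕ → ℝ)
    (hpos : ∀ n, 1 ≤ n → 0 < μ n)
    (l : ℝ) (hl : 1 < l)
    (hratio : Tendsto (fun n : ℕ => μ n / μ (2 * n)) atTop (nhds l)) (k : ℕ) :
    Tendsto (fun n : ℕ => Real.log (μ n) - Real.log (μ (2 ^ k * n))) atTop
      (nhds (k * Real.log l)) := by
  induction k with
  | zero => simp
  | succ k ih =>
    have h1 : Tendsto (fun n : ℕ => Real.log (μ n / μ (2 * n))) atTop (nhds (Real.log l)) :=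
      hratio.log (by positivity)
    have h2 : Tendsto (fun n : ℕ => 2 ^ k * n) atTop atTop :=
      tendsto_id.const_mul_atTop' (by positivity)
    have h3 := ih.add (h1.comp h2)
    have e : (k : ℝ) * Real.log l + Real.log l = ((k + 1 : ℕ) : ℝ) * Real.log l := by
      push_cast; ring
    rw [e] at h3
    refine h3.congr' ?_
    filter_upwards [eventually_ge_atTop 1] with n hn
    have hp : 1 ≤ 2 ^ k * n := Nat.mul_pos (by positivity) hn
    have a1 := hpos _ hp
    have a2 := hpos (2 * (2 ^ k * n)) (by omega)
    have e2 : 2 ^ (k + 1) * n = 2 * (2 ^ k * n) := by ring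
    simp only [Function.comp]
    rw [Real.log_div a1.ne' a2.ne', e2]
    ring

lemma aux_floor (t h : ℝ) (ht : 0 ≤ t) (k : ℕ) (hk : k * Real.log 2 ≤ h)
    (hk' : h < (k + 1) * Real.log 2) :
    1 ≤ ⌊Real.exp t⌋₊ ∧ 2 ^ k * ⌊Real.exp t⌋₊ ≤ ⌊Real.exp (t + h)⌋₊ ∧
      ⌊Real.exp (t + h)⌋₊ ≤ 2 ^ (k + 2) * ⌊Real.exp t⌋₊ := by
  have hn : 1 ≤ ⌊Real.exp t⌋₊ := by
    apply Nat.le_floor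
    simpa using Real.one_le_exp ht
  have hpw : ∀ j : ℕ, Real.exp (j * Real.log 2) = 2 ^ j := by
    intro j
    rw [Real.exp_nat_mul, Real.exp_log (by norm_num)]
  have b1 : (2 : ℝ) ^ k ≤ Real.exp h := by
    rw [← hpw]; exact Real.exp_le_exp.2 hk
  have b2 : Real.exp h ≤ (2 : ℝ) ^ (k + 1) := by
    rw [← hpw]; apply Real.exp_le_exp.2; push_cast; exact hk'.le
  have c1 := Nat.floor_le (Real.exp_pos t).le
  have c2 := Nat.lt_floor_add_one (Real.exp t)
  have hnR : (1 : ℝ) ≤ (⌊Real.exp t⌋₊ : ℝ) := by exact_mod_cast hn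
  refine ⟨hn, ?_, ?_⟩
  · apply Nat.le_floor
    push_cast
    rw [Real.exp_add, mul_comm (Real.exp t)]
    exact mul_le_mul b1 c1 (by positivity) (by positivity)
  · apply Nat.floor_le_of_le
    push_cast
    rw [Real.exp_add, mul_comm (Real.exp t)]
    calc Real.exp h * Real.exp t ≤ 2 ^ (k + 1) * (2 * (⌊Real.exp t⌋₊ : ℝ)) :=
          mul_le_mul b2 (by linarith) (by positivity) (by positivity)
      _ = _ := by ring

lemma aux_bounds (μ : ℕ → ℝ)
    (hpos : ∀ n, 1 ≤ n → 0 < μ n)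
    (hmono : ∀ m n, 1 ≤ m → m ≤ n → μ n ≤ μ m)
    (l : ℝ) (hl : 1 < l)
    (hratio : Tendsto (fun n : ℕ => μ n / μ (2 * n)) atTop (nhds l)) (h : ℝ) (hh : 0 < h) :
    ((Real.log l / Real.log 2 - Real.log l / h : ℝ) : EReal) ≤ liminfRatio (fStep μ) h ∧
    limsupRatio (fStep μ) h ≤
      ((Real.log l / Real.log 2 + 2 * Real.log l / h : ℝ) : EReal) := by
  have hL : 0 < Real.log l := Real.log_pos hl
  have h2 : 0 < Real.log 2 := Real.log_pos (by norm_num)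
  obtain ⟨k, hk, hk'⟩ : ∃ k : ℕ, k * Real.log 2 ≤ h ∧ h < (k + 1) * Real.log 2 :=
    ⟨⌊h / Real.log 2⌋₊, (le_div_iff₀ h2).1 (Nat.floor_le (by positivity)),
      (div_lt_iff₀ h2).1 (Nat.lt_floor_add_one _)⟩
  have hfl : Tendsto (fun t : ℝ => ⌊Real.exp t⌋₊) atTop atTop :=
    tendsto_nat_floor_atTop.comp Real.tendsto_exp_atTop
  have T : ∀ j : ℕ, Tendsto (fun t : ℝ => (((Real.log (μ ⌊Real.exp t⌋₊) -
      Real.log (μ (2 ^ j * ⌊Real.exp t⌋₊))) / h : ℝ) : EReal)) atTop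
      (nhds ((j * Real.log l / h : ℝ) : EReal)) := fun j =>
    (continuous_coe_real_ereal.tendsto _).comp
      (((aux_pow μ hpos l hl hratio j).comp hfl).div_const h)
  constructor
  · calc ((Real.log l / Real.log 2 - Real.log l / h : ℝ) : EReal)
        ≤ ((k * Real.log l / h : ℝ) : EReal) := by
          rw [EReal.coe_le_coe_iff]
          have : Real.log l / Real.log 2 ≤ (k + 1) * Real.log l / h := by
            rw [div_le_div_iff₀ h2 hh]; nlinarith
          have e : (k + 1) * Real.log l / h = k * Real.log l / h + Real.log l / h := by ring
          linarith
      _ = _ := (T k).liminf_eq.symm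
      _ ≤ _ := by
          refine liminf_le_liminf ?_
          filter_upwards [eventually_ge_atTop 0] with t ht
          rw [EReal.coe_le_coe_iff]
          obtain ⟨a, b, c⟩ := aux_floor t h ht k hk hk'
          have p : 1 ≤ 2 ^ k * ⌊Real.exp t⌋₊ := Nat.mul_pos (by positivity) a
          have := Real.log_le_log (hpos _ (p.trans b)) (hmono _ _ p b)
          apply div_le_div_of_nonneg_right _ hh.le
          unfold fStep
          linarith
  · calc limsupRatio (fStep μ) h ≤ _ := by
          refine limsup_le_limsup ?_
          filter_upwards [eventually_ge_atTop 0] with t ht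
          show _ ≤ (((Real.log (μ ⌊Real.exp t⌋₊) -
            Real.log (μ (2 ^ (k + 2) * ⌊Real.exp t⌋₊))) / h : ℝ) : EReal)
          rw [EReal.coe_le_coe_iff]
          obtain ⟨a, b, c⟩ := aux_floor t h ht k hk hk'
          have p : 1 ≤ 2 ^ k * ⌊Real.exp t⌋₊ := Nat.mul_pos (by positivity) a
          have := Real.log_le_log (hpos _ ((p.trans b).trans c)) (hmono _ _ (p.trans b) c)
          apply div_le_div_of_nonneg_right _ hh.le
          unfold fStep
          linarith
      _ = _ := (T (k + 2)).limsup_eq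
      _ ≤ _ := by
          rw [EReal.coe_le_coe_iff]
          have : k * Real.log l / h ≤ Real.log l / Real.log 2 := by
            rw [div_le_div_iff₀ hh h2]; nlinarith
          have e : ((k + 2 : ℕ) : ℝ) * Real.log l / h
            = k * Real.log l / h + 2 * Real.log l / h := by push_cast; ring
          linarith

/-- if `(μ_n)_{n≥1}` is nonincreasing, positive, converges to `0`, and
`μ_n/μ_{2n} → ℓ ∈ (1,∞)`, then with `f(t) = −log μ(e^t)` one has
`lim_{h→∞} limsup_{t→∞} (f(t+h)−f(t))/h = lim_{h→∞} liminf_{t→∞} (f(t+h)−f(t))/h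
  = (log ℓ)/(log 2)`;
equivalently `c̲ = c̄ = (log 2)/(log ℓ) ∈ (0,∞)`. -/
theorem stmt_9 (μ : ℕ → ℝ)
    (hpos : ∀ n, 1 ≤ n → 0 < μ n)
    (hmono : ∀ m n, 1 ≤ m → m ≤ n → μ n ≤ μ m)
    (hlim : Tendsto μ atTop (nhds 0))
    (l : ℝ) (hl : 1 < l)
    (hratio : Tendsto (fun n : ℕ => μ n / μ (2 * n)) atTop (nhds l)) :
    Tendsto (fun h : ℝ => limsupRatio (fStep μ) h) atTop
      (nhds ((Real.log l / Real.log 2 : ℝ) : EReal)) ∧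
    Tendsto (fun h : ℝ => liminfRatio (fStep μ) h) atTop
      (nhds ((Real.log l / Real.log 2 : ℝ) : EReal)) := by
  have B := aux_bounds μ hpos hmono l hl hratio
  have lo : Tendsto (fun h : ℝ => ((Real.log l / Real.log 2 - Real.log l / h : ℝ) : EReal))
      atTop (nhds ((Real.log l / Real.log 2 : ℝ) : EReal)) := by
    refine (continuous_coe_real_ereal.tendsto _).comp ?_
    simpa using (tendsto_const_nhds (x := Real.log l / Real.log 2)).sub
      ((tendsto_const_nhds (x := Real.log l)).div_atTop tendsto_id)
  have hi : Tendsto (fun h : ℝ => ((Real.log l / Real.log 2 + 2 * Real.log l / h : ℝ) : EReal))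
      atTop (nhds ((Real.log l / Real.log 2 : ℝ) : EReal)) := by
    refine (continuous_coe_real_ereal.tendsto _).comp ?_
    simpa using (tendsto_const_nhds (x := Real.log l / Real.log 2)).add
      ((tendsto_const_nhds (x := 2 * Real.log l)).div_atTop tendsto_id)
  have le : ∀ h, liminfRatio (fStep μ) h ≤ limsupRatio (fStep μ) h := fun h => liminf_le_limsup
  constructor
  · refine tendsto_of_tendsto_of_tendsto_of_le_of_le' lo hi ?_ ?_
    · filter_upwards [eventually_gt_atTop 0] with h hh
      exact (B h hh).1.trans (le h)
    · filter_upwards [eventually_gt_atTop 0] with h hh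
      exact (B h hh).2
  · refine tendsto_of_tendsto_of_tendsto_of_le_of_le' lo hi ?_ ?_
    · filter_upwards [eventually_gt_atTop 0] with h hh
      exact (B h hh).1
    · filter_upwards [eventually_gt_atTop 0] with h hh
      exact (le h).trans (B h hh).2
end

section
/- Let (x_n)_{n≥0} be a strictly increasing sequence of positive integers with x_0 = 1 and x_n/x_{n+1} → 0 as n → ∞, and define μ_k := 1/x_n for x_{n−1} < k ≤ x_n. Then for every α > 1, lim_{n→∞} x_{n+1}^{α−1} Σ_{k = x_{n+1}+1}^∞ μ_k^α = 0. -/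
open Filter

lemma aux_nonneg (x : ℕ → ℕ) (hmono : StrictMono x) (μ : ℕ → ℝ)
    (hμ : ∀ n : ℕ, 1 ≤ n → ∀ k : ℕ, x (n - 1) < k → k ≤ x n → μ k = 1 / (x n : ℝ))
    (k : ℕ) (hk : x 0 < k) : 0 ≤ μ k := by
  classical
  have hex : ∃ n, k ≤ x n := ⟨k, hmono.le_apply⟩
  have h1 : k ≤ x (Nat.find hex) := Nat.find_spec hex
  have hn : 1 ≤ Nat.find hex := by
    by_contra h
    have h0 : Nat.find hex = 0 := by omega
    rw [h0] at h1
    omega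
  have h2 : ¬ k ≤ x (Nat.find hex - 1) := Nat.find_min hex (by omega)
  rw [hμ _ hn k (by omega) h1]
  positivity

lemma aux_block (x : ℕ → ℕ) (hmono : StrictMono x) (hpos : ∀ n, 0 < x n) (μ : ℕ → ℝ)
    (hμ : ∀ n : ℕ, 1 ≤ n → ∀ k : ℕ, x (n - 1) < k → k ≤ x n → μ k = 1 / (x n : ℝ))
    (α : ℝ) (M : ℕ) :
    ∑ k ∈ Finset.Ico (x M + 1) (x (M + 1) + 1), μ k ^ α ≤ ((x (M + 1) : ℝ) ^ (α - 1))⁻¹ := by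
  have hp : (0 : ℝ) < x (M + 1) := by exact_mod_cast hpos _
  have h : ∀ k ∈ Finset.Ico (x M + 1) (x (M + 1) + 1),
      μ k ^ α = ((x (M + 1) : ℝ) ^ α)⁻¹ := by
    intro k hk
    rw [Finset.mem_Ico] at hk
    rw [hμ (M + 1) (by omega) k (by simpa using hk.1) (by omega), one_div,
      Real.inv_rpow hp.le]
  rw [Finset.sum_congr rfl h, Finset.sum_const, Nat.card_Ico, nsmul_eq_mul]
  have hc : ((x (M + 1) + 1 - (x M + 1) : ℕ) : ℝ) ≤ x (M + 1) := by
    exact_mod_cast (by omega)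
  have hq : 0 < (x (M + 1) : ℝ) ^ α := Real.rpow_pos_of_pos hp _
  calc _ ≤ (x (M + 1) : ℝ) * ((x (M + 1) : ℝ) ^ α)⁻¹ := by gcongr
    _ = _ := by
      rw [Real.rpow_sub hp, Real.rpow_one, inv_div, div_eq_mul_inv]

lemma aux_sum (x : ℕ → ℕ) (hmono : StrictMono x) (hpos : ∀ n, 0 < x n) (μ : ℕ → ℝ)
    (hμ : ∀ n : ℕ, 1 ≤ n → ∀ k : ℕ, x (n - 1) < k → k ≤ x n → μ k = 1 / (x n : ℝ))
    (α δ : ℝ) (hδ : 0 < δ) (hδ' : δ ≤ 1 / 2) (m : ℕ)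
    (hr : ∀ j, m ≤ j → ((x (j + 1) : ℝ) ^ (α - 1))⁻¹ ≤ δ * ((x j : ℝ) ^ (α - 1))⁻¹)
    (M : ℕ) (hM : m ≤ M) :
    ∑ k ∈ Finset.Ico (x m + 1) (x M + 1), μ k ^ α + 2 * δ * ((x M : ℝ) ^ (α - 1))⁻¹
      ≤ 2 * δ * ((x m : ℝ) ^ (α - 1))⁻¹ := by
  induction M, hM using Nat.le_induction with
  | base => simp
  | succ M hM ih =>
    have h1 := hmono.monotone hM
    have h2 := hmono.monotone (Nat.le_succ M)
    rw [← Finset.sum_Ico_consecutive _ (show x m + 1 ≤ x M + 1 by omega)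
      (show x M + 1 ≤ x (M + 1) + 1 by simpa using h2)]
    have h3 := aux_block x hmono hpos μ hμ α M
    have h4 := hr M hM
    have h5 : 0 ≤ ((x (M + 1) : ℝ) ^ (α - 1))⁻¹ := by positivity
    nlinarith

/-- let `(x_n)_{n≥0}` be a strictly increasing sequence of positive integers
with `x_0 = 1` and `x_n/x_{n+1} → 0`, and let `μ_k = 1/x_n` for `x_{n−1} < k ≤ x_n`. Then
for every `α > 1` one has `x_{n+1}^{α−1} Σ_{k > x_{n+1}} μ_k^α → 0` as `n → ∞`. -/
theorem stmt_16 (x : ℕ → ℕ) (hx0 : x 0 = 1) (hmono : StrictMono x)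
    (hratio : Tendsto (fun n => (x n : ℝ) / (x (n + 1) : ℝ)) atTop (nhds 0))
    (μ : ℕ → ℝ)
    (hμ : ∀ n : ℕ, 1 ≤ n → ∀ k : ℕ, x (n - 1) < k → k ≤ x n → μ k = 1 / (x n : ℝ)) :
    ∀ α : ℝ, 1 < α →
      Tendsto (fun n : ℕ =>
          (x (n + 1) : ℝ) ^ (α - 1) * ∑' k : ℕ, μ (x (n + 1) + 1 + k) ^ α)
        atTop (nhds 0) := by
  intro α hα
  have hpos : ∀ n, 0 < x n := fun n => by
    have := hmono.monotone (Nat.zero_le n)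
    omega
  have hposR : ∀ n, (0 : ℝ) < x n := fun n => by exact_mod_cast hpos n
  have hβ : 0 < α - 1 := by linarith
  have hr : Tendsto (fun n => ((x n : ℝ) / (x (n + 1) : ℝ)) ^ (α - 1)) atTop (nhds 0) := by
    have := hratio.rpow_const (p := α - 1) (Or.inr hβ.le)
    rwa [Real.zero_rpow hβ.ne'] at this
  have hnn : ∀ n k, 0 ≤ μ (x (n + 1) + 1 + k) ^ α := fun n k => by
    apply Real.rpow_nonneg
    apply aux_nonneg x hmono μ hμ
    have := hmono.monotone (Nat.zero_le (n + 1))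
    omega
  rw [Metric.tendsto_atTop]
  intro ε hε
  obtain ⟨δ, hδ, hδ1, hδ2⟩ : ∃ δ : ℝ, 0 < δ ∧ δ ≤ 1 / 2 ∧ 2 * δ < ε :=
    ⟨min (1 / 2) (ε / 4), by positivity, min_le_left _ _, by
      have := min_le_right (1 / 2 : ℝ) (ε / 4)
      linarith⟩
  obtain ⟨N, hN⟩ := eventually_atTop.1 (hr.eventually (gt_mem_nhds hδ))
  refine ⟨N, fun n hn => ?_⟩
  have hr' : ∀ j, n + 1 ≤ j →
      ((x (j + 1) : ℝ) ^ (α - 1))⁻¹ ≤ δ * ((x j : ℝ) ^ (α - 1))⁻¹ := by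
    intro j hj
    have h := (hN j (by omega)).le
    rw [Real.div_rpow (hposR _).le (hposR _).le] at h
    have h1 := Real.rpow_pos_of_pos (hposR j) (α - 1)
    have h2 := Real.rpow_pos_of_pos (hposR (j + 1)) (α - 1)
    rw [← div_eq_mul_inv, le_div_iff₀ h1, mul_comm, ← div_eq_mul_inv]
    exact h
  have hpw := Real.rpow_pos_of_pos (hposR (n + 1)) (α - 1)
  have hT : ∑' k : ℕ, μ (x (n + 1) + 1 + k) ^ α ≤ 2 * δ * ((x (n + 1) : ℝ) ^ (α - 1))⁻¹ := by
    apply Real.tsum_le_of_sum_range_le (hnn n)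
    intro K
    have h := aux_sum x hmono hpos μ hμ α δ hδ hδ1 (n + 1) hr' (x (n + 1) + (n + 1) + K) (by omega)
    rw [Finset.sum_Ico_eq_sum_range] at h
    have hle : x (n + 1) + (n + 1) + K ≤ x (x (n + 1) + (n + 1) + K) := hmono.le_apply
    have h2 : ∑ k ∈ Finset.range K, μ (x (n + 1) + 1 + k) ^ α ≤
        ∑ k ∈ Finset.range (x (x (n + 1) + (n + 1) + K) + 1 - (x (n + 1) + 1)),
          μ (x (n + 1) + 1 + k) ^ α := by
      apply Finset.sum_le_sum_of_subset_of_nonneg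
      · apply Finset.range_mono
        omega
      · intro i _ _
        exact hnn n i
    have h3 : 0 ≤ 2 * δ * ((x (x (n + 1) + (n + 1) + K) : ℝ) ^ (α - 1))⁻¹ := by positivity
    linarith
  have hT0 : 0 ≤ ∑' k : ℕ, μ (x (n + 1) + 1 + k) ^ α := tsum_nonneg (hnn n)
  rw [Real.dist_eq, sub_zero, abs_of_nonneg (mul_nonneg hpw.le hT0)]
  calc _ ≤ (x (n + 1) : ℝ) ^ (α - 1) * (2 * δ * ((x (n + 1) : ℝ) ^ (α - 1))⁻¹) := by gcongr
    _ = 2 * δ := by field_simp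
    _ < ε := hδ2
end

section
/- Let (x_n)_{n≥0} be a strictly increasing sequence of positive integers with x_0 = 1 and x_n/x_{n+1} → 0 as n → ∞, and define μ_k := 1/x_n for x_{n−1} < k ≤ x_n. Then for every α > 1, lim_{n→∞} (Σ_{k = 2x_n+1}^∞ μ_k^α)/(Σ_{k = x_n+1}^∞ μ_k^α) = 1; in particular the sequence (μ_k^α) is eccentric, so the trace-class operator with singular values μ_k^α is singularly traceable. -/
open Filter

/-- let `(x_n)_{n≥0}` be a strictly increasing sequence of positive integers
with `x_0 = 1` and `x_n/x_{n+1} → 0`, and let `μ_k = 1/x_n` for `x_{n−1} < k ≤ x_n`. Then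
for every `α > 1` the tails `S^{(α)}_m = Σ_{k>m} μ_k^α` satisfy
`S^{(α)}_{2x_n}/S^{(α)}_{x_n} → 1`; in particular `(μ_k^α)` is eccentric, i.e. the tails
ratio `S^{(α)}_{2m}/S^{(α)}_m` tends to `1` along some strictly increasing sequence. -/
theorem stmt_17 (x : ℕ → ℕ) (hx0 : x 0 = 1) (hmono : StrictMono x)
    (hratio : Tendsto (fun n => (x n : ℝ) / (x (n + 1) : ℝ)) atTop (nhds 0))
    (μ : ℕ → ℝ)
    (hμ : ∀ n : ℕ, 1 ≤ n → ∀ k : ℕ, x (n - 1) < k → k ≤ x n → μ k = 1 / (x n : ℝ)) :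
    ∀ α : ℝ, 1 < α →
      Tendsto (fun n : ℕ =>
          (∑' k : ℕ, μ (2 * x n + 1 + k) ^ α) / (∑' k : ℕ, μ (x n + 1 + k) ^ α))
        atTop (nhds 1) ∧
      ∃ nj : ℕ → ℕ, StrictMono nj ∧
        Tendsto (fun j : ℕ =>
            (∑' k : ℕ, μ (2 * nj j + 1 + k) ^ α) / (∑' k : ℕ, μ (nj j + 1 + k) ^ α))
          atTop (nhds 1) := by
  intro α hα
  suffices h : Tendsto (fun n : ℕ =>
      (∑' k : ℕ, μ (2 * x n + 1 + k) ^ α) / (∑' k : ℕ, μ (x n + 1 + k) ^ α))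
      atTop (nhds 1) from ⟨h, x, hmono, h⟩
  have hxpos : ∀ n, 1 ≤ x n := fun n => hx0 ▸ hmono.monotone (Nat.zero_le n)
  -- bounds on μ
  have hbd : ∀ k : ℕ, 2 ≤ k → 0 ≤ μ k ∧ μ k ≤ 1 / (k : ℝ) := by
    intro k hk
    have hex : ∃ n, k ≤ x n := ⟨k, hmono.id_le k⟩
    classical
    have hs := Nat.find_spec hex
    have h1 : 1 ≤ Nat.find hex := by
      by_contra hc
      have h0 : Nat.find hex = 0 := by omega
      rw [h0, hx0] at hs
      omega
    have hm := Nat.find_min hex (m := Nat.find hex - 1) (by omega)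
    rw [hμ _ h1 k (by omega) hs]
    have hkp : (0 : ℝ) < k := by exact_mod_cast (by omega : 0 < k)
    refine ⟨by positivity, ?_⟩
    apply one_div_le_one_div_of_le hkp
    exact_mod_cast hs
  have hnn : ∀ n k : ℕ, 0 ≤ μ (x n + 1 + k) ^ α := fun n k =>
    Real.rpow_nonneg (hbd _ (by have := hxpos n; omega)).1 _
  have hsum : ∀ n : ℕ, Summable (fun k : ℕ => μ (x n + 1 + k) ^ α) := by
    intro n
    have h1 : Summable (fun k : ℕ => 1 / (k : ℝ) ^ α) := Real.summable_one_div_nat_rpow.2 hα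
    have h2 := h1.comp_injective (add_right_injective (x n + 1))
    refine Summable.of_nonneg_of_le (hnn n) (fun k => ?_) h2
    have hb := hbd (x n + 1 + k) (by have := hxpos n; omega)
    have h3 := Real.rpow_le_rpow hb.1 hb.2 (by linarith : 0 ≤ α)
    rw [Real.div_rpow zero_le_one (Nat.cast_nonneg _), Real.one_rpow] at h3
    exact h3
  have hev : ∀ᶠ n in atTop, (x n : ℝ) / x (n + 1) < 1 / 2 :=
    hratio.eventually (gt_mem_nhds (by norm_num))
  have key : ∀ᶠ n in atTop, 1 - 2 * ((x n : ℝ) / x (n + 1)) ≤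
      (∑' k : ℕ, μ (2 * x n + 1 + k) ^ α) / (∑' k : ℕ, μ (x n + 1 + k) ^ α) ∧
      (∑' k : ℕ, μ (2 * x n + 1 + k) ^ α) / (∑' k : ℕ, μ (x n + 1 + k) ^ α) ≤ 1 := by
    filter_upwards [hev] with n hn
    have hMp : (0 : ℝ) < x (n + 1) := by exact_mod_cast hxpos (n + 1)
    have hNp : (0 : ℝ) < x n := by exact_mod_cast hxpos n
    have hNM : 2 * (x n : ℝ) ≤ x (n + 1) := by
      rw [div_lt_iff₀ hMp] at hn
      linarith
    have hNM' : 2 * x n ≤ x (n + 1) := by exact_mod_cast hNM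
    set c : ℝ := (1 / (x (n + 1) : ℝ)) ^ α with hc
    have hcp : 0 < c := by positivity
    have hblock : ∀ L : ℕ, x n + L ≤ x (n + 1) →
        ∑ k ∈ Finset.range L, μ (x n + 1 + k) ^ α = L * c := by
      intro L hL
      rw [Finset.sum_congr rfl (g := fun _ => c)]
      · simp
      · intro k hk
        have := Finset.mem_range.1 hk
        rw [hμ (n + 1) (by omega) _ (by simp; omega) (by omega)]
    have hsplit := (hsum n).sum_add_tsum_nat_add (x n)
    rw [hblock (x n) (by omega)] at hsplit
    have hsh : ∑' k : ℕ, μ (x n + 1 + (k + x n)) ^ α = ∑' k : ℕ, μ (2 * x n + 1 + k) ^ α := by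
      congr 1
      funext k
      congr 2
      ring
    rw [hsh] at hsplit
    have hT : 0 ≤ ∑' k : ℕ, μ (2 * x n + 1 + k) ^ α := by
      rw [← hsh]
      exact tsum_nonneg fun k => hnn n _
    have hlow := (hsum n).sum_le_tsum (Finset.range (x (n + 1) - x n)) (fun k _ => hnn n k)
    rw [hblock _ (by omega), Nat.cast_sub (by omega)] at hlow
    set S := ∑' k : ℕ, μ (x n + 1 + k) ^ α
    set T := ∑' k : ℕ, μ (2 * x n + 1 + k) ^ α
    have hNc : 0 < (x n : ℝ) * c := by positivity
    have hS : 0 < S := by linarith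
    have hlow2 : (x (n + 1) : ℝ) * c ≤ 2 * S := by nlinarith
    constructor
    · rw [le_div_iff₀ hS]
      have h4 : (x n : ℝ) * c ≤ 2 * ((x n : ℝ) / x (n + 1)) * S := by
        have h5 : (x n : ℝ) * c = (x n : ℝ) / x (n + 1) * (x (n + 1) * c) := by
          field_simp
        rw [h5]
        have := mul_le_mul_of_nonneg_left hlow2 (div_pos hNp hMp).le
        linarith
      linarith
    · rw [div_le_one hS]
      linarith
  refine tendsto_of_tendsto_of_tendsto_of_le_of_le' (g := fun n => 1 - 2 * ((x n : ℝ) / x (n + 1)))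
    ?_ tendsto_const_nhds (key.mono fun _ h => h.1) (key.mono fun _ h => h.2)
  simpa using (hratio.const_mul 2).const_sub 1
end

section
/- Let (b_n)_{n≥0} be a strictly increasing sequence of nonnegative reals with b_0 = 0 and b_{n+1} − b_n → ∞, and define f(t) := b_n for b_{n−1} < t ≤ b_n. Then: (i) lim_{h→∞} liminf_{t→∞} (f(t+h) − f(t))/h = 0; (ii) for every h > 0, limsup_{t→∞} (f(t+h) − f(t))/h = +∞ (hence lim_{h→∞} limsup_{t→∞} (f(t+h) − f(t))/h = +∞); (iii) liminf_{t→∞} f(t)/t = 1. Equivalently, for the associated operator c̲ = 0, c̄ = ∞ and ord = 1. -/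
open Filter

/-- The step function `f(t) = b_n` for `b_{n−1} < t ≤ b_n`: `f t = b (least n with t ≤ b n)`. -/
noncomputable def fStair (b : ℕ → ℝ) (t : ℝ) : ℝ :=
  b (sInf {n : ℕ | t ≤ b n})

theorem fStair_eq (b : ℕ → ℝ) (n : ℕ) (t : ℝ) (h1 : t ≤ b n) (h2 : ∀ m < n, b m < t) :
    fStair b t = b n := by
  unfold fStair
  congr 1
  apply le_antisymm
  · exact Nat.sInf_le h1
  · refine le_csInf ⟨n, h1⟩ ?_
    intro m hm
    by_contra hlt
    exact absurd (h2 m (not_le.mp hlt)) (not_lt.mpr hm)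

theorem fStair_succ (b : ℕ → ℝ) (hmono : StrictMono b) (n : ℕ) (t : ℝ) (h1 : t ≤ b (n + 1))
    (h2 : b n < t) : fStair b t = b (n + 1) :=
  fStair_eq b (n + 1) t h1 fun _ hm => (hmono.monotone (Nat.lt_succ_iff.mp hm)).trans_lt h2

theorem fStair_self (b : ℕ → ℝ) (hmono : StrictMono b) (n : ℕ) : fStair b (b n) = b n :=
  fStair_eq b n _ le_rfl fun _ hm => hmono hm

theorem tendsto_stair (b : ℕ → ℝ) (hnonneg : ∀ n, 0 ≤ b n)
    (hgap : Tendsto (fun n => b (n + 1) - b n) atTop atTop) : Tendsto b atTop atTop := by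
  rw [← tendsto_add_atTop_iff_nat 1]
  exact tendsto_atTop_mono (fun n => by linarith [hnonneg n]) hgap

theorem le_fStair (b : ℕ → ℝ) (hb : Tendsto b atTop atTop) (t : ℝ) : t ≤ fStair b t :=
  Nat.sInf_mem (s := {n : ℕ | t ≤ b n}) (hb.eventually_ge_atTop t).exists

theorem fStair_mono (b : ℕ → ℝ) (hmono : StrictMono b) (hb : Tendsto b atTop atTop) :
    Monotone (fStair b) := by
  intro s t hst
  exact hmono.monotone (Nat.sInf_le (hst.trans (le_fStair b hb t)))

theorem liminfRatio_zero (b : ℕ → ℝ) (hmono : StrictMono b) (hb : Tendsto b atTop atTop)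
    (hgap : Tendsto (fun n => b (n + 1) - b n) atTop atTop) (h : ℝ) (hh : 0 < h) :
    liminfRatio (fStair b) h = 0 := by
  unfold liminfRatio
  apply le_antisymm
  · refine liminf_le_of_frequently_le ?_
    have ht : Tendsto (fun n => b (n + 1) - h) atTop atTop :=
      tendsto_atTop_add_const_right _ (-h) (hb.comp (tendsto_add_atTop_nat 1))
    refine ht.frequently (Eventually.frequently ?_)
    filter_upwards [hgap.eventually_gt_atTop h] with n hn
    rw [sub_add_cancel, fStair_self b hmono,
      fStair_succ b hmono n (b (n + 1) - h) (by linarith) (by linarith)]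
    simp
  · apply le_liminf_of_le
    · isBoundedDefault
    · refine Eventually.of_forall fun t => ?_
      have := fStair_mono b hmono hb (show t ≤ t + h by linarith)
      exact_mod_cast div_nonneg (sub_nonneg.mpr this) hh.le

theorem limsupRatio_top (b : ℕ → ℝ) (hmono : StrictMono b) (hb : Tendsto b atTop atTop)
    (hgap : Tendsto (fun n => b (n + 1) - b n) atTop atTop) (h : ℝ) (hh : 0 < h) :
    limsupRatio (fStair b) h = ⊤ := by
  rw [EReal.eq_top_iff_forall_lt]
  intro y
  refine lt_of_lt_of_le (EReal.coe_lt_coe_iff.mpr (lt_add_one y)) ?_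
  unfold limsupRatio
  refine le_limsup_of_frequently_le ?_
  refine hb.frequently (Eventually.frequently ?_)
  filter_upwards [hgap.eventually_gt_atTop h, hgap.eventually_ge_atTop ((y + 1) * h)] with n hn hy
  rw [fStair_self b hmono, fStair_succ b hmono n (b n + h) (by linarith) (by linarith)]
  rw [EReal.coe_le_coe_iff, le_div_iff₀ hh]
  exact hy

/-- let `(b_n)` be strictly increasing nonnegative reals with `b_0 = 0` and
`b_{n+1} − b_n → ∞`, and `f(t) = b_n` for `b_{n−1} < t ≤ b_n`. Then
(i) `lim_{h→∞} liminf_{t→∞} (f(t+h)−f(t))/h = 0`;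
(ii) `limsup_{t→∞} (f(t+h)−f(t))/h = +∞` for every `h > 0`, hence
`lim_{h→∞} limsup_{t→∞} (f(t+h)−f(t))/h = +∞`;
(iii) `liminf_{t→∞} f(t)/t = 1`. Equivalently `c̲ = 0`, `c̄ = ∞` and `ord = 1`. -/
theorem stmt_19 (b : ℕ → ℝ) (hb0 : b 0 = 0) (hnonneg : ∀ n, 0 ≤ b n) (hmono : StrictMono b)
    (hgap : Tendsto (fun n => b (n + 1) - b n) atTop atTop) :
    Tendsto (fun h : ℝ => liminfRatio (fStair b) h) atTop (nhds (0 : EReal)) ∧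
    (∀ h : ℝ, 0 < h → limsupRatio (fStair b) h = (⊤ : EReal)) ∧
    Tendsto (fun h : ℝ => limsupRatio (fStair b) h) atTop (nhds (⊤ : EReal)) ∧
    liminf (fun t : ℝ => ((fStair b t / t : ℝ) : EReal)) atTop = (1 : EReal) := by
  have hb := tendsto_stair b hnonneg hgap
  refine ⟨?_, limsupRatio_top b hmono hb hgap, ?_, ?_⟩
  · refine tendsto_const_nhds.congr' ?_
    filter_upwards [eventually_gt_atTop 0] with h hh
    exact (liminfRatio_zero b hmono hb hgap h hh).symm
  · refine tendsto_const_nhds.congr' ?_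
    filter_upwards [eventually_gt_atTop 0] with h hh
    exact (limsupRatio_top b hmono hb hgap h hh).symm
  · apply le_antisymm
    · refine liminf_le_of_frequently_le ?_
      refine hb.frequently (Eventually.frequently ?_)
      filter_upwards [hb.eventually_gt_atTop 0] with n hn
      rw [fStair_self b hmono, div_self hn.ne']
      simp
    · apply le_liminf_of_le
      · isBoundedDefault
      · filter_upwards [eventually_gt_atTop 0] with t ht
        have : (1 : ℝ) ≤ fStair b t / t := by
          rw [le_div_iff₀ ht, one_mul]
          exact le_fStair b hb t
        exact_mod_cast this
end
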